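/- arXiv:2010.09502 — 2 statements merged into one kernel-verified Lean document; each statement's English description precedes it below -/
import Mathlib

section
/- There exists a constant B > 0 such that for all x > 0 and all n ∈ ℕ, n ≥ 1, |J_{in/2}(x)² + Y_{in/2}(x)²| ≤ B · x^{−1/4}. -/
open MeasureTheory Filter Topology

/-- Bessel function of the first kind of complex order `ν` at real `x > 0`. -/
noncomputable def besselJ (ν : ℂ) (x : ℝ) : ℂ :=
  ∑' k : ℕ, ((-1 : ℂ) ^ k * Complex.exp ((ν + 2 * k) * (Real.log (x / 2) : ℂ))) /
    ((Nat.factorial k : ℂ) * Complex.Gamma (ν + k + 1))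

/-- Bessel function of the second kind of complex order `ν` at real `x > 0`. -/
noncomputable def besselY (ν : ℂ) (x : ℝ) : ℂ :=
  (besselJ ν x * Complex.cos (Real.pi * ν) - besselJ (-ν) x) / Complex.sin (Real.pi * ν)

/-- Bessel function of the first kind of order `0` (real-valued). -/
noncomputable def besselJ0 (x : ℝ) : ℝ :=
  ∑' k : ℕ, (-1 : ℝ) ^ k * (x / 2) ^ (2 * k) / (Nat.factorial k : ℝ) ^ 2

/-- Lommel function `S_{-1,0}` for `x > 0`. -/
noncomputable def lommelS (x : ℝ) : ℝ :=
  ∫ t in Set.Ioi (0 : ℝ), t * Real.exp (-x * Real.sinh t)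

/-- Struve function `K₀` for `x > 0`. -/
noncomputable def struveK0 (x : ℝ) : ℝ :=
  (2 / Real.pi) * ∫ t in Set.Ioi (0 : ℝ), Real.exp (-x * Real.sinh t)

/-- Bessel function of the second kind of order `0` (real-valued, for `x > 0`). -/
noncomputable def besselY0 (x : ℝ) : ℝ :=
  (2 / Real.pi) * ((Real.log (x / 2) + Real.eulerMascheroniConstant) * besselJ0 x +
    ∑' k : ℕ, (-1 : ℝ) ^ k * ((harmonic (k + 1) : ℚ) : ℝ) * (x / 2) ^ (2 * (k + 1)) /
      (Nat.factorial (k + 1) : ℝ) ^ 2)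

/-- Struve function `H₀`: `H₀ = K₀ˢ + Y₀`. -/
noncomputable def struveH0 (x : ℝ) : ℝ := struveK0 x + besselY0 x

/-!
In the variable `t = log (x / 2)`, the function `w t = J_ν (2 e ^ t)` solves `w'' = -Q w` with
`Q t = 4 e ^ (2 t) - ν ^ 2`, which for imaginary `ν` is `‖ν‖ ^ 2 + 4 e ^ (2 t)`. Two energies of
this oscillator decrease. Because `Q` increases, `‖w'‖ ^ 2 / Q + ‖w‖ ^ 2` decreases from its
limit `2 / ‖Γ (ν + 1)‖ ^ 2` at `-∞`, which bounds `‖J_ν‖` near the origin. Because `Q` grows at most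
like `e ^ (2 t)`, the energy of `√x J_ν` as a function of `x` decreases as well; starting it at
`x = ‖ν‖`, where the two energies are comparable, gives the decay in `x`. Together,
`(x + ‖ν‖) ‖J_ν x‖ ^ 2 = O(sinh (π ‖ν‖))`. Finally `J_ν ^ 2 + Y_ν ^ 2` is a quadratic form in
`J_ν` and `J_{-ν}` with coefficients `O(1 / sinh (π ‖ν‖))` for `‖ν‖` bounded below.
-/

section FrobeniusSeries

/-- Coefficients of an everywhere absolutely convergent power series. -/
def EntireCoeffs (c : ℕ → ℂ) : Prop := ∀ r : ℝ, 0 ≤ r → Summable fun k => ‖c k‖ * r ^ k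

/-- The Frobenius series `∑ c k * z ^ (ν + 2 k)` in the logarithmic variable `t = log z`; in this
variable `z * d/dz` becomes `d/dt`, which multiplies the `k`-th coefficient by `ν + 2 k`. -/
noncomputable def frobeniusSeries (ν : ℂ) (c : ℕ → ℂ) (t : ℝ) : ℂ :=
  ∑' k : ℕ, c k * Complex.exp ((ν + 2 * k) * t)

variable {c : ℕ → ℂ}

lemma EntireCoeffs.mul_exponent (hc : EntireCoeffs c) (ν : ℂ) :
    EntireCoeffs fun k => (ν + 2 * k) * c k := by
  intro r hr
  refine .of_nonneg_of_le (fun k => by positivity) (fun k => ?_)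
    ((hc (2 * r) (by positivity)).mul_left (‖ν‖ + 2))
  have exponent_le : ‖ν + 2 * (k : ℂ)‖ ≤ (‖ν‖ + 2) * 2 ^ k := by
    have k_le : (k : ℝ) ≤ 2 ^ k := by exact_mod_cast k.lt_two_pow_self.le
    have one_le : (1 : ℝ) ≤ 2 ^ k := one_le_pow₀ one_le_two
    calc ‖ν + 2 * (k : ℂ)‖ ≤ ‖ν‖ + 2 * k := (norm_add_le _ _).trans_eq (by simp)
      _ ≤ (‖ν‖ + 2) * 2 ^ k := by nlinarith [norm_nonneg ν]
  calc ‖(ν + 2 * k) * c k‖ * r ^ k = ‖ν + 2 * (k : ℂ)‖ * ‖c k‖ * r ^ k := by rw [norm_mul]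
    _ ≤ (‖ν‖ + 2) * 2 ^ k * ‖c k‖ * r ^ k := by gcongr
    _ = (‖ν‖ + 2) * (‖c k‖ * (2 * r) ^ k) := by rw [mul_pow]; ring

lemma norm_cexp_add_two_mul_nat_mul_ofReal (ν : ℂ) (k : ℕ) (t : ℝ) :
    ‖Complex.exp ((ν + 2 * k) * t)‖ = Real.exp (ν.re * t) * Real.exp (2 * t) ^ k := by
  rw [Complex.norm_exp, ← Real.exp_nat_mul, ← Real.exp_add]
  congr 1
  simp
  ring

lemma EntireCoeffs.summable_frobeniusSeries (hc : EntireCoeffs c) (ν : ℂ) (t : ℝ) :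
    Summable fun k : ℕ => c k * Complex.exp ((ν + 2 * k) * t) := by
  refine .of_norm (((hc _ (Real.exp_pos (2 * t)).le).mul_left (Real.exp (ν.re * t))).congr
    fun k => ?_)
  rw [norm_mul, norm_cexp_add_two_mul_nat_mul_ofReal]
  ring

lemma EntireCoeffs.hasDerivAt_frobeniusSeries (hc : EntireCoeffs c) (ν : ℂ) (t : ℝ) :
    HasDerivAt (frobeniusSeries ν c) (frobeniusSeries ν (fun k => (ν + 2 * k) * c k) t) t := by
  set R := |t| + 1
  have ht : t ∈ Metric.ball (0 : ℝ) R := by simp [R]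
  refine hasDerivAt_tsum_of_isPreconnected
    (g := fun (k : ℕ) (s : ℝ) => c k * Complex.exp ((ν + 2 * k) * s))
    (g' := fun (k : ℕ) (s : ℝ) => (ν + 2 * k) * c k * Complex.exp ((ν + 2 * k) * s))
    (((hc.mul_exponent ν) _ (Real.exp_pos (2 * R)).le).mul_left (Real.exp (|ν.re| * R)))
    Metric.isOpen_ball (convex_ball _ _).isPreconnected (fun k s _ => ?_) (fun k s hs => ?_) ht
    (hc.summable_frobeniusSeries ν t) ht
  · have exponent_deriv : HasDerivAt (fun s : ℝ => (ν + 2 * k) * (s : ℂ)) (ν + 2 * k) s := by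
      simpa using (Complex.ofRealCLM.hasDerivAt (x := s)).const_mul (ν + 2 * (k : ℂ))
    exact (exponent_deriv.cexp.const_mul (c k)).congr_deriv (by ring)
  · have abs_s_le : |s| ≤ R := by simpa using (Metric.mem_ball.1 hs).le
    have re_mul_le : ν.re * s ≤ |ν.re| * R :=
      (le_abs_self _).trans (by rw [abs_mul]; gcongr)
    have s_le : s ≤ R := (le_abs_self s).trans abs_s_le
    calc ‖(ν + 2 * k) * c k * Complex.exp ((ν + 2 * k) * s)‖
        = Real.exp (ν.re * s) * (‖(ν + 2 * k) * c k‖ * Real.exp (2 * s) ^ k) := by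
          rw [norm_mul _ (Complex.exp _), norm_cexp_add_two_mul_nat_mul_ofReal]; ring
      _ ≤ Real.exp (|ν.re| * R) * (‖(ν + 2 * k) * c k‖ * Real.exp (2 * R) ^ k) := by gcongr

lemma tendsto_exp_two_mul_atBot : Tendsto (fun t : ℝ => Real.exp (2 * t)) atBot (𝓝 0) :=
  Real.tendsto_exp_atBot.comp (tendsto_id.const_mul_atBot two_pos)

lemma EntireCoeffs.tendsto_cexp_mul_frobeniusSeries_atBot (hc : EntireCoeffs c) (ν : ℂ) :
    Tendsto (fun t : ℝ => Complex.exp (-ν * t) * frobeniusSeries ν c t) atBot (𝓝 (c 0)) := by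
  have eq_powerSeries (t : ℝ) : Complex.exp (-ν * t) * frobeniusSeries ν c t
      = ∑' k : ℕ, c k * (Real.exp (2 * t) : ℂ) ^ k := by
    rw [frobeniusSeries, ← tsum_mul_left]
    congr 1 with k
    rw [mul_left_comm, ← Complex.exp_add, Complex.ofReal_exp, ← Complex.exp_nat_mul]
    congr 2
    push_cast
    ring
  simp_rw [eq_powerSeries]
  rw [← tsum_ite_eq 0 c]
  refine tendsto_tsum_of_dominated_convergence (bound := fun k => ‖c k‖)
    (by simpa using hc 1 zero_le_one) (fun k => ?_) ?_
  · have exp_tendsto : Tendsto (fun t : ℝ => (Real.exp (2 * t) : ℂ)) atBot (𝓝 0) := by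
      exact_mod_cast (Complex.continuous_ofReal.tendsto 0).comp tendsto_exp_two_mul_atBot
    rcases eq_or_ne k 0 with rfl | hk
    · simp
    · simpa [hk] using (exp_tendsto.pow k).const_mul (c k)
  · filter_upwards [eventually_le_atBot (0 : ℝ)] with t ht k
    have exp_le_one : Real.exp (2 * t) ≤ 1 := Real.exp_le_one_iff.2 (by linarith)
    rw [norm_mul, norm_pow, Complex.norm_real, Real.norm_eq_abs, Real.abs_exp]
    exact mul_le_of_le_one_right (norm_nonneg _) (pow_le_one₀ (Real.exp_pos _).le exp_le_one)

lemma EntireCoeffs.tendsto_norm_frobeniusSeries_atBot (hc : EntireCoeffs c) {ν : ℂ}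
    (hν : ν.re = 0) : Tendsto (fun t => ‖frobeniusSeries ν c t‖) atBot (𝓝 ‖c 0‖) :=
  (hc.tendsto_cexp_mul_frobeniusSeries_atBot ν).norm.congr fun t => by
    simp [Complex.norm_exp, hν]

end FrobeniusSeries

section BesselSeries

/-- The coefficient of `(x / 2) ^ (ν + 2 k)` in `J_ν x`. -/
noncomputable def besselCoeff (ν : ℂ) (k : ℕ) : ℂ :=
  (-1 : ℂ) ^ k / ((Nat.factorial k : ℂ) * Complex.Gamma (ν + k + 1))

lemma besselCoeff_succ (ν : ℂ) (k : ℕ) :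
    ((k : ℂ) + 1) * (ν + k + 1) * besselCoeff ν (k + 1) = -besselCoeff ν k := by
  have gamma_inv := Complex.one_div_Gamma_eq_self_mul_one_div_Gamma_add_one (ν + k + 1)
  have k_add_one_ne : (k : ℂ) + 1 ≠ 0 := k.cast_add_one_ne_zero
  rw [besselCoeff, besselCoeff, div_mul_eq_div_div, div_mul_eq_div_div,
    div_eq_mul_inv _ (Complex.Gamma (ν + k + 1)), gamma_inv, Nat.factorial_succ, pow_succ,
    Nat.cast_succ, ← add_assoc ν]
  push_cast
  field_simp

lemma entireCoeffs_besselCoeff (ν : ℂ) : EntireCoeffs (besselCoeff ν) := by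
  intro r hr
  refine summable_of_ratio_norm_eventually_le one_half_lt_one ?_
  have norm_tendsto : Tendsto (fun k : ℕ => ‖ν + k + 1‖) atTop atTop := by
    refine tendsto_atTop_mono (fun k => ?_)
      (tendsto_atTop_add_const_left _ (ν.re + 1) tendsto_natCast_atTop_atTop)
    calc ν.re + 1 + k = (ν + k + 1).re := by simp; ring
      _ ≤ ‖ν + k + 1‖ := Complex.re_le_norm _
  filter_upwards [norm_tendsto.eventually_ge_atTop (2 * r)] with k hk
  have succ_norm : ((k : ℝ) + 1) * ‖ν + k + 1‖ * ‖besselCoeff ν (k + 1)‖ = ‖besselCoeff ν k‖ := by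
    have := congrArg norm (besselCoeff_succ ν k)
    rwa [norm_neg, norm_mul, norm_mul, ← Nat.cast_succ, Complex.norm_natCast, Nat.cast_succ] at this
  have two_mul_le : 2 * r ≤ ((k : ℝ) + 1) * ‖ν + k + 1‖ :=
    hk.trans (le_mul_of_one_le_left (norm_nonneg _) (by simp))
  simp only [norm_mul, norm_norm, norm_pow, Real.norm_of_nonneg hr]
  calc ‖besselCoeff ν (k + 1)‖ * r ^ (k + 1)
      = 1 / 2 * (2 * r * ‖besselCoeff ν (k + 1)‖ * r ^ k) := by ring
    _ ≤ 1 / 2 * (((k : ℝ) + 1) * ‖ν + k + 1‖ * ‖besselCoeff ν (k + 1)‖ * r ^ k) := by gcongr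
    _ = 1 / 2 * (‖besselCoeff ν k‖ * r ^ k) := by rw [succ_norm]

/-- The Bessel function `J_ν` in the logarithmic variable `t = log (x / 2)`. -/
noncomputable def besselLog (ν : ℂ) : ℝ → ℂ := frobeniusSeries ν (besselCoeff ν)

/-- The derivative of `besselLog ν`, obtained by differentiating the series term by term. -/
noncomputable def besselLogDeriv (ν : ℂ) : ℝ → ℂ :=
  frobeniusSeries ν fun k => (ν + 2 * k) * besselCoeff ν k

lemma besselJ_eq_besselLog (ν : ℂ) (x : ℝ) : besselJ ν x = besselLog ν (Real.log (x / 2)) := by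
  simp only [besselJ, besselLog, frobeniusSeries, besselCoeff, div_mul_eq_mul_div]

lemma hasDerivAt_besselLog (ν : ℂ) (t : ℝ) :
    HasDerivAt (besselLog ν) (besselLogDeriv ν t) t :=
  (entireCoeffs_besselCoeff ν).hasDerivAt_frobeniusSeries ν t

lemma frobeniusSeries_exponent_sq_mul_besselCoeff (ν : ℂ) (t : ℝ) :
    frobeniusSeries ν (fun k => (ν + 2 * k) * ((ν + 2 * k) * besselCoeff ν k)) t
      = (ν ^ 2 - 4 * Real.exp (2 * t)) * besselLog ν t := by
  set e : ℕ → ℂ := fun k => Complex.exp ((ν + 2 * k) * t)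
  have e_succ (k : ℕ) : e (k + 1) = Real.exp (2 * t) * e k := by
    simp only [e]
    rw [Complex.ofReal_exp, ← Complex.exp_add]
    congr 1
    push_cast
    ring
  have entire := entireCoeffs_besselCoeff ν
  have summable := (entire.summable_frobeniusSeries ν t).mul_left (ν ^ 2)
  have summable_sq := ((entire.mul_exponent ν).mul_exponent ν).summable_frobeniusSeries ν t
  have summable_diff : Summable fun k : ℕ => 4 * (k * (ν + k)) * besselCoeff ν k * e k :=
    (summable_sq.sub summable).congr fun k => by ring
  have shift : ∑' k : ℕ, 4 * (k * (ν + k)) * besselCoeff ν k * e k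
      = -4 * Real.exp (2 * t) * besselLog ν t := by
    rw [summable_diff.tsum_eq_zero_add, besselLog, frobeniusSeries, ← tsum_mul_left]
    simp only [Nat.cast_zero, zero_mul, mul_zero, zero_add]
    congr 1 with k
    rw [e_succ, Nat.cast_succ]
    linear_combination 4 * (Real.exp (2 * t) * e k) * besselCoeff_succ ν k
  calc frobeniusSeries ν (fun k => (ν + 2 * k) * ((ν + 2 * k) * besselCoeff ν k)) t
      = ∑' k : ℕ, (ν ^ 2 * (besselCoeff ν k * e k)
          + 4 * (k * (ν + k)) * besselCoeff ν k * e k) := by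
        rw [frobeniusSeries]
        congr 1 with k
        ring
    _ = ν ^ 2 * besselLog ν t + -4 * Real.exp (2 * t) * besselLog ν t := by
        rw [summable.tsum_add summable_diff, tsum_mul_left, shift, besselLog, frobeniusSeries]
    _ = (ν ^ 2 - 4 * Real.exp (2 * t)) * besselLog ν t := by ring

lemma hasDerivAt_besselLogDeriv (ν : ℂ) (t : ℝ) :
    HasDerivAt (besselLogDeriv ν) ((ν ^ 2 - 4 * Real.exp (2 * t)) * besselLog ν t) t :=
  (((entireCoeffs_besselCoeff ν).mul_exponent ν).hasDerivAt_frobeniusSeries ν t).congr_deriv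
    (frobeniusSeries_exponent_sq_mul_besselCoeff ν t)

end BesselSeries

section Oscillator

variable {E : Type*} [NormedAddCommGroup E] [InnerProductSpace ℝ E] {w w' : ℝ → E}
  {Q Q' : ℝ → ℝ}

lemma antitone_norm_sq_div_add_norm_sq (hw : ∀ t, HasDerivAt w (w' t) t)
    (hw' : ∀ t, HasDerivAt w' (-Q t • w t) t) (hQ : ∀ t, HasDerivAt Q (Q' t) t)
    (Q_pos : ∀ t, 0 < Q t) (Q'_nonneg : ∀ t, 0 ≤ Q' t) :
    Antitone fun t => ‖w' t‖ ^ 2 / Q t + ‖w t‖ ^ 2 := by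
  refine antitone_of_hasDerivAt_nonpos (f' := fun t => -(‖w' t‖ ^ 2 * Q' t / Q t ^ 2))
    (fun t => ?_) (fun t => ?_)
  · refine (((hw' t).norm_sq.div (hQ t) (Q_pos t).ne').add (hw t).norm_sq).congr_deriv ?_
    rw [real_inner_smul_right, real_inner_comm (w' t) (w t)]
    have Q_ne := (Q_pos t).ne'
    field_simp
    ring
  · have := Q'_nonneg t
    exact neg_nonpos.2 (by positivity)

/-- In the variable `x = exp t`, this is the energy `‖u'‖ ^ 2 + (Q + 1 / 4) / x ^ 2 * ‖u‖ ^ 2` of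
`u = √x * w`, which solves `u'' = -(Q + 1 / 4) / x ^ 2 * u`. -/
noncomputable def sqrtScaledEnergy (w w' : ℝ → E) (Q : ℝ → ℝ) (t : ℝ) : ℝ :=
  Real.exp (-t) * (‖w' t + (1 / 2 : ℝ) • w t‖ ^ 2 + (Q t + 1 / 4) * ‖w t‖ ^ 2)

lemma antitone_sqrtScaledEnergy (hw : ∀ t, HasDerivAt w (w' t) t)
    (hw' : ∀ t, HasDerivAt w' (-Q t • w t) t) (hQ : ∀ t, HasDerivAt Q (Q' t) t)
    (Q'_le : ∀ t, Q' t ≤ 2 * Q t + 1 / 2) : Antitone (sqrtScaledEnergy w w' Q) := by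
  refine antitone_of_hasDerivAt_nonpos
    (f' := fun t => Real.exp (-t) * ((Q' t - (2 * Q t + 1 / 2)) * ‖w t‖ ^ 2))
    (fun t => ?_) (fun t => ?_)
  · have exp_deriv : HasDerivAt (fun t : ℝ => Real.exp (-t)) (-Real.exp (-t)) t := by
      simpa using (hasDerivAt_neg t).exp
    have shifted_deriv := (hw' t).add ((hw t).const_smul (1 / 2 : ℝ))
    refine (exp_deriv.mul (shifted_deriv.norm_sq.add
      (((hQ t).add_const (1 / 4)).mul (hw t).norm_sq))).congr_deriv ?_
    simp only [Pi.add_apply, Pi.smul_apply, Pi.mul_apply, norm_add_sq_real, inner_add_left,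
      inner_add_right, real_inner_smul_left, real_inner_smul_right, real_inner_self_eq_norm_sq,
      norm_smul, real_inner_comm (w' t) (w t), mul_pow, Real.norm_eq_abs, sq_abs]
    ring
  · exact mul_nonpos_of_nonneg_of_nonpos (Real.exp_pos _).le
      (mul_nonpos_of_nonpos_of_nonneg (sub_nonpos.2 (Q'_le t)) (sq_nonneg _))

lemma norm_add_half_smul_sq_le (a b : E) :
    ‖a + (1 / 2 : ℝ) • b‖ ^ 2 ≤ 2 * ‖a‖ ^ 2 + 1 / 2 * ‖b‖ ^ 2 := by
  have triangle : ‖a + (1 / 2 : ℝ) • b‖ ≤ ‖a‖ + 1 / 2 * ‖b‖ :=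
    (norm_add_le _ _).trans_eq (by rw [norm_smul, Real.norm_of_nonneg one_half_pos.le])
  calc ‖a + (1 / 2 : ℝ) • b‖ ^ 2 ≤ (‖a‖ + 1 / 2 * ‖b‖) ^ 2 := by gcongr
    _ ≤ 2 * (‖a‖ ^ 2 + (1 / 2 * ‖b‖) ^ 2) := add_sq_le
    _ = 2 * ‖a‖ ^ 2 + 1 / 2 * ‖b‖ ^ 2 := by ring

lemma sqrtScaledEnergy_le {A t : ℝ} (Q_pos : 0 < Q t)
    (hA : ‖w' t‖ ^ 2 / Q t + ‖w t‖ ^ 2 ≤ A) :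
    sqrtScaledEnergy w w' Q t ≤ Real.exp (-t) * ((2 * Q t + 3 / 4) * A) := by
  have norm_w_sq_le : ‖w t‖ ^ 2 ≤ A := le_of_add_le_of_nonneg_right hA (by positivity)
  have norm_w'_sq_le : ‖w' t‖ ^ 2 ≤ (A - ‖w t‖ ^ 2) * Q t :=
    (div_le_iff₀ Q_pos).1 (le_sub_iff_add_le.2 hA)
  have half_smul_le := norm_add_half_smul_sq_le (w' t) (w t)
  rw [sqrtScaledEnergy]
  gcongr
  nlinarith [mul_nonneg Q_pos.le (sq_nonneg ‖w t‖)]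

lemma exp_neg_mul_mul_norm_sq_le {A s t : ℝ} (hw : ∀ t, HasDerivAt w (w' t) t)
    (hw' : ∀ t, HasDerivAt w' (-Q t • w t) t) (hQ : ∀ t, HasDerivAt Q (Q' t) t)
    (Q'_le : ∀ t, Q' t ≤ 2 * Q t + 1 / 2) (Q_pos : 0 < Q s)
    (hA : ‖w' s‖ ^ 2 / Q s + ‖w s‖ ^ 2 ≤ A) (hst : s ≤ t) :
    Real.exp (-t) * (Q t * ‖w t‖ ^ 2) ≤ Real.exp (-s) * ((2 * Q s + 3 / 4) * A) :=
  calc Real.exp (-t) * (Q t * ‖w t‖ ^ 2) ≤ sqrtScaledEnergy w w' Q t := by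
        rw [sqrtScaledEnergy]
        gcongr
        nlinarith [sq_nonneg ‖w t‖, sq_nonneg ‖w' t + (1 / 2 : ℝ) • w t‖]
    _ ≤ sqrtScaledEnergy w w' Q s := antitone_sqrtScaledEnergy hw hw' hQ Q'_le hst
    _ ≤ Real.exp (-s) * ((2 * Q s + 3 / 4) * A) := sqrtScaledEnergy_le Q_pos hA

end Oscillator

section ImaginaryNumbers

variable {z : ℂ}

lemma eq_im_mul_I_of_re_eq_zero (hz : z.re = 0) : z = z.im * Complex.I := by
  simpa [hz] using (Complex.re_add_im z).symm

lemma norm_eq_abs_im_of_re_eq_zero (hz : z.re = 0) : ‖z‖ = |z.im| :=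
  (Complex.abs_im_eq_norm.2 hz).symm

lemma sq_eq_neg_norm_sq_of_re_eq_zero (hz : z.re = 0) : z ^ 2 = -(‖z‖ : ℂ) ^ 2 := by
  rw [← Complex.ofReal_pow, norm_eq_abs_im_of_re_eq_zero hz, sq_abs]
  conv_lhs => rw [eq_im_mul_I_of_re_eq_zero hz, mul_pow, Complex.I_sq]
  simp

lemma norm_sin_of_re_eq_zero (hz : z.re = 0) : ‖Complex.sin z‖ = Real.sinh ‖z‖ := by
  rw [norm_eq_abs_im_of_re_eq_zero hz, ← Real.abs_sinh]
  conv_lhs => rw [eq_im_mul_I_of_re_eq_zero hz, Complex.sin_mul_I, ← Complex.ofReal_sinh]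
  simp only [norm_mul, Complex.norm_I, mul_one, Complex.norm_real, Real.norm_eq_abs]

lemma norm_cos_of_re_eq_zero (hz : z.re = 0) : ‖Complex.cos z‖ = Real.cosh ‖z‖ := by
  rw [norm_eq_abs_im_of_re_eq_zero hz, Real.cosh_abs]
  conv_lhs => rw [eq_im_mul_I_of_re_eq_zero hz, Complex.cos_mul_I, ← Complex.ofReal_cosh]
  rw [Complex.norm_real, Real.norm_of_nonneg (Real.cosh_pos _).le]

lemma norm_Gamma_add_one_sq_of_re_eq_zero (hz : z.re = 0) (z_ne : z ≠ 0) :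
    ‖Complex.Gamma (z + 1)‖ ^ 2 = Real.pi * ‖z‖ / Real.sinh (Real.pi * ‖z‖) := by
  have conj_eq : 1 - z = starRingEnd ℂ (z + 1) := by
    apply Complex.ext <;> simp [hz]
  have reflection : Complex.Gamma (z + 1) * Complex.Gamma (1 - z)
      = z * (Real.pi / Complex.sin (Real.pi * z)) := by
    rw [Complex.Gamma_add_one z z_ne, mul_assoc, Complex.Gamma_mul_Gamma_one_sub]
  have norm_conj : ‖Complex.Gamma (1 - z)‖ = ‖Complex.Gamma (z + 1)‖ := by
    rw [conj_eq, Complex.Gamma_conj, Complex.norm_conj]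
  have norm_sin : ‖Complex.sin (Real.pi * z)‖ = Real.sinh (Real.pi * ‖z‖) := by
    rw [norm_sin_of_re_eq_zero (by simp [hz]), norm_mul, Complex.norm_real,
      Real.norm_of_nonneg Real.pi_pos.le]
  calc ‖Complex.Gamma (z + 1)‖ ^ 2 = ‖Complex.Gamma (z + 1) * Complex.Gamma (1 - z)‖ := by
        rw [norm_mul, norm_conj, sq]
    _ = Real.pi * ‖z‖ / Real.sinh (Real.pi * ‖z‖) := by
        rw [reflection, norm_mul, norm_div, norm_sin, Complex.norm_real,
          Real.norm_of_nonneg Real.pi_pos.le]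
        ring

end ImaginaryNumbers

section ImaginaryOrder

variable {ν : ℂ}

lemma norm_besselCoeff_zero_sq (hν : ν.re = 0) (ν_ne : ν ≠ 0) :
    ‖besselCoeff ν 0‖ ^ 2 = Real.sinh (Real.pi * ‖ν‖) / (Real.pi * ‖ν‖) := by
  simp [besselCoeff, norm_Gamma_add_one_sq_of_re_eq_zero hν ν_ne]

/-- The coefficient `Q` in the equation `w'' = -Q w` satisfied by `besselLog ν` when `ν` is
imaginary. -/
noncomputable def besselPotential (ν : ℂ) (t : ℝ) : ℝ := ‖ν‖ ^ 2 + 4 * Real.exp (2 * t)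

lemma besselPotential_pos (ν : ℂ) (t : ℝ) : 0 < besselPotential ν t := by
  unfold besselPotential
  positivity

lemma hasDerivAt_besselPotential (ν : ℂ) (t : ℝ) :
    HasDerivAt (besselPotential ν) (8 * Real.exp (2 * t)) t :=
  (((((hasDerivAt_id t).const_mul 2).exp).const_mul 4).const_add (‖ν‖ ^ 2)).congr_deriv (by
    simp only [id, mul_one]
    ring)

lemma hasDerivAt_besselLogDeriv_of_re_eq_zero (hν : ν.re = 0) (t : ℝ) :
    HasDerivAt (besselLogDeriv ν) (-besselPotential ν t • besselLog ν t) t := by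
  refine (hasDerivAt_besselLogDeriv ν t).congr_deriv ?_
  rw [sq_eq_neg_norm_sq_of_re_eq_zero hν, Complex.real_smul, besselPotential]
  push_cast
  ring

lemma tendsto_besselLog_energy_atBot (hν : ν.re = 0) (ν_ne : ν ≠ 0) :
    Tendsto (fun t => ‖besselLogDeriv ν t‖ ^ 2 / besselPotential ν t + ‖besselLog ν t‖ ^ 2) atBot
      (𝓝 (2 * ‖besselCoeff ν 0‖ ^ 2)) := by
  have norm_ν_sq_ne : ‖ν‖ ^ 2 ≠ 0 := by simpa using ν_ne
  have entire := entireCoeffs_besselCoeff ν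
  have besselLog_tendsto := entire.tendsto_norm_frobeniusSeries_atBot hν
  have besselLogDeriv_tendsto := (entire.mul_exponent ν).tendsto_norm_frobeniusSeries_atBot hν
  have potential_tendsto : Tendsto (besselPotential ν) atBot (𝓝 (‖ν‖ ^ 2)) := by
    have := (tendsto_exp_two_mul_atBot.const_mul 4).const_add (‖ν‖ ^ 2)
    rwa [mul_zero, add_zero] at this
  refine (((besselLogDeriv_tendsto.pow 2).div potential_tendsto norm_ν_sq_ne).add
    (besselLog_tendsto.pow 2)).trans_eq (congrArg 𝓝 ?_)
  rw [Nat.cast_zero, mul_zero, add_zero, norm_mul, mul_pow, mul_div_cancel_left₀ _ norm_ν_sq_ne]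
  ring

lemma besselLog_energy_le (hν : ν.re = 0) (ν_ne : ν ≠ 0) (t : ℝ) :
    ‖besselLogDeriv ν t‖ ^ 2 / besselPotential ν t + ‖besselLog ν t‖ ^ 2
      ≤ 2 * ‖besselCoeff ν 0‖ ^ 2 :=
  (antitone_norm_sq_div_add_norm_sq (hasDerivAt_besselLog ν)
    (hasDerivAt_besselLogDeriv_of_re_eq_zero hν) (hasDerivAt_besselPotential ν)
    (besselPotential_pos ν) (fun t => by positivity)).ge_of_tendsto
    (tendsto_besselLog_energy_atBot hν ν_ne) t

lemma norm_besselJ_sq_le (hν : ν.re = 0) (ν_ne : ν ≠ 0) (x : ℝ) :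
    ‖besselJ ν x‖ ^ 2 ≤ 2 * ‖besselCoeff ν 0‖ ^ 2 := by
  rw [besselJ_eq_besselLog]
  have := besselPotential_pos ν (Real.log (x / 2))
  exact le_of_add_le_of_nonneg_right (besselLog_energy_le hν ν_ne _) (by positivity)

lemma mul_norm_besselJ_sq_le_of_norm_le {x : ℝ} (hν : ν.re = 0) (ν_ne : ν ≠ 0) (hx : ‖ν‖ ≤ x) :
    x * ‖besselJ ν x‖ ^ 2 ≤ (4 * ‖ν‖ + 3 / (4 * ‖ν‖)) * (2 * ‖besselCoeff ν 0‖ ^ 2) := by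
  have norm_pos : 0 < ‖ν‖ := norm_pos_iff.2 ν_ne
  have x_pos : 0 < x := norm_pos.trans_le hx
  have Q'_le (t : ℝ) : 8 * Real.exp (2 * t) ≤ 2 * besselPotential ν t + 1 / 2 := by
    unfold besselPotential
    nlinarith [sq_nonneg ‖ν‖]
  have potential_log {y : ℝ} (hy : 0 < y) :
      besselPotential ν (Real.log (y / 2)) = ‖ν‖ ^ 2 + y ^ 2 := by
    rw [besselPotential, two_mul, Real.exp_add, Real.exp_log (by positivity)]
    ring
  have decay := exp_neg_mul_mul_norm_sq_le (hasDerivAt_besselLog ν)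
    (hasDerivAt_besselLogDeriv_of_re_eq_zero hν) (hasDerivAt_besselPotential ν) Q'_le
    (besselPotential_pos ν _) (besselLog_energy_le hν ν_ne (Real.log (‖ν‖ / 2)))
    (Real.log_le_log (by positivity) (by gcongr : ‖ν‖ / 2 ≤ x / 2))
  rw [potential_log norm_pos, potential_log x_pos, Real.exp_neg, Real.exp_neg,
    Real.exp_log (by positivity), Real.exp_log (by positivity), ← besselJ_eq_besselLog] at decay
  calc x * ‖besselJ ν x‖ ^ 2 = (x / 2)⁻¹ * (x ^ 2 * ‖besselJ ν x‖ ^ 2) / 2 := by field_simp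
    _ ≤ (x / 2)⁻¹ * ((‖ν‖ ^ 2 + x ^ 2) * ‖besselJ ν x‖ ^ 2) / 2 := by
        gcongr
        exact le_add_of_nonneg_left (sq_nonneg _)
    _ ≤ (‖ν‖ / 2)⁻¹ * ((2 * (‖ν‖ ^ 2 + ‖ν‖ ^ 2) + 3 / 4) * (2 * ‖besselCoeff ν 0‖ ^ 2)) / 2 := by
        gcongr
    _ = (4 * ‖ν‖ + 3 / (4 * ‖ν‖)) * (2 * ‖besselCoeff ν 0‖ ^ 2) := by
        field_simp
        ring

lemma add_norm_mul_norm_besselJ_sq_le (hν : ν.re = 0) (ν_ne : ν ≠ 0) (x : ℝ) :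
    (x + ‖ν‖) * ‖besselJ ν x‖ ^ 2
      ≤ (10 + 3 / (2 * ‖ν‖ ^ 2)) / Real.pi * Real.sinh (Real.pi * ‖ν‖) := by
  have norm_pos : 0 < ‖ν‖ := norm_pos_iff.2 ν_ne
  have norm_sq_le := norm_besselJ_sq_le hν ν_ne x
  have order_part : ‖ν‖ * ‖besselJ ν x‖ ^ 2 ≤ ‖ν‖ * (2 * ‖besselCoeff ν 0‖ ^ 2) := by gcongr
  have x_part : x * ‖besselJ ν x‖ ^ 2
      ≤ (4 * ‖ν‖ + 3 / (4 * ‖ν‖)) * (2 * ‖besselCoeff ν 0‖ ^ 2) := by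
    rcases le_total ‖ν‖ x with hx | hx
    · exact mul_norm_besselJ_sq_le_of_norm_le hν ν_ne hx
    · have : ‖ν‖ ≤ 4 * ‖ν‖ + 3 / (4 * ‖ν‖) :=
        le_add_of_le_of_nonneg (by linarith) (by positivity)
      gcongr
      exact hx.trans this
  calc (x + ‖ν‖) * ‖besselJ ν x‖ ^ 2
      ≤ (5 * ‖ν‖ + 3 / (4 * ‖ν‖)) * (2 * ‖besselCoeff ν 0‖ ^ 2) := by linarith
    _ = (10 + 3 / (2 * ‖ν‖ ^ 2)) / Real.pi * Real.sinh (Real.pi * ‖ν‖) := by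
        rw [norm_besselCoeff_zero_sq hν ν_ne]
        field_simp
        ring

lemma besselJ_sq_add_besselY_sq (ν : ℂ) (x : ℝ) (hsin : Complex.sin (Real.pi * ν) ≠ 0) :
    besselJ ν x ^ 2 + besselY ν x ^ 2
      = (besselJ ν x ^ 2 + besselJ (-ν) x ^ 2
          - 2 * Complex.cos (Real.pi * ν) * besselJ ν x * besselJ (-ν) x)
        / Complex.sin (Real.pi * ν) ^ 2 := by
  rw [besselY]
  field_simp
  linear_combination besselJ ν x ^ 2 * Complex.sin_sq_add_cos_sq (Real.pi * ν)

lemma norm_sq_add_sq_sub_two_mul_le (a b c : ℂ) {A : ℝ} (ha : ‖a‖ ^ 2 ≤ A) (hb : ‖b‖ ^ 2 ≤ A) :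
    ‖a ^ 2 + b ^ 2 - 2 * c * a * b‖ ≤ 2 * (‖c‖ + 1) * A := by
  have norm_mul_le : ‖a‖ * ‖b‖ ≤ A := by nlinarith [sq_nonneg (‖a‖ - ‖b‖)]
  calc ‖a ^ 2 + b ^ 2 - 2 * c * a * b‖ ≤ ‖a ^ 2‖ + ‖b ^ 2‖ + ‖2 * c * a * b‖ :=
        (norm_sub_le _ _).trans (by gcongr; exact norm_add_le _ _)
    _ = ‖a‖ ^ 2 + ‖b‖ ^ 2 + 2 * ‖c‖ * (‖a‖ * ‖b‖) := by
        simp only [norm_pow, norm_mul, Complex.norm_ofNat]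
        ring
    _ ≤ A + A + 2 * ‖c‖ * A := by gcongr
    _ = 2 * (‖c‖ + 1) * A := by ring

lemma cosh_add_one_div_sinh_le {y : ℝ} (hy : 0 < y) :
    (Real.cosh y + 1) / Real.sinh y ≤ 1 + 2 / y := by
  have le_sinh : y ≤ Real.sinh y := Real.self_le_sinh_iff.2 hy.le
  have exp_le_one : Real.exp (-y) ≤ 1 := Real.exp_le_one_iff.2 (by linarith)
  have cosh_eq : Real.cosh y = Real.sinh y + Real.exp (-y) := by
    linarith [Real.cosh_sub_sinh y]
  rw [div_le_iff₀ (hy.trans_le le_sinh), cosh_eq, add_mul, one_mul, div_mul_eq_mul_div, add_assoc]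
  gcongr
  rw [le_div_iff₀ hy]
  nlinarith

lemma norm_besselJ_sq_add_besselY_sq_le {x : ℝ} (hν : ν.re = 0) (ν_ne : ν ≠ 0) (hx : 0 < x) :
    ‖besselJ ν x ^ 2 + besselY ν x ^ 2‖
      ≤ 2 * (1 + 2 / (Real.pi * ‖ν‖)) * ((10 + 3 / (2 * ‖ν‖ ^ 2)) / Real.pi) / (x + ‖ν‖) := by
  have pi_mul_re : ((Real.pi : ℂ) * ν).re = 0 := by simp [hν]
  have norm_pi_mul : ‖(Real.pi : ℂ) * ν‖ = Real.pi * ‖ν‖ := by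
    rw [norm_mul, Complex.norm_real, Real.norm_of_nonneg Real.pi_pos.le]
  have norm_sin := norm_sin_of_re_eq_zero pi_mul_re
  have norm_cos := norm_cos_of_re_eq_zero pi_mul_re
  rw [norm_pi_mul] at norm_sin norm_cos
  set y := Real.pi * ‖ν‖
  set K := (10 + 3 / (2 * ‖ν‖ ^ 2)) / Real.pi
  have y_pos : 0 < y := by positivity
  have sinh_pos : 0 < Real.sinh y := Real.sinh_pos_iff.2 y_pos
  have sin_ne : Complex.sin (Real.pi * ν) ≠ 0 := norm_pos_iff.1 (norm_sin ▸ sinh_pos)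
  have norm_J_sq_le : ‖besselJ ν x‖ ^ 2 ≤ K * Real.sinh y / (x + ‖ν‖) :=
    (le_div_iff₀' (by positivity)).2 (add_norm_mul_norm_besselJ_sq_le hν ν_ne x)
  have norm_J_neg_sq_le : ‖besselJ (-ν) x‖ ^ 2 ≤ K * Real.sinh y / (x + ‖ν‖) := by
    have := add_norm_mul_norm_besselJ_sq_le (ν := -ν) (by simp [hν]) (neg_ne_zero.2 ν_ne) x
    rw [norm_neg] at this
    exact (le_div_iff₀' (by positivity)).2 this
  rw [besselJ_sq_add_besselY_sq ν x sin_ne, norm_div, norm_pow, norm_sin]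
  calc _ ≤ 2 * (Real.cosh y + 1) * (K * Real.sinh y / (x + ‖ν‖)) / Real.sinh y ^ 2 := by
        rw [← norm_cos]
        gcongr
        exact norm_sq_add_sq_sub_two_mul_le _ _ _ norm_J_sq_le norm_J_neg_sq_le
    _ = 2 * ((Real.cosh y + 1) / Real.sinh y) * K / (x + ‖ν‖) := by field_simp
    _ ≤ 2 * (1 + 2 / y) * K / (x + ‖ν‖) := by
        gcongr
        exact cosh_add_one_div_sinh_le y_pos

end ImaginaryOrder

lemma inv_add_le_mul_rpow_neg {x m δ α : ℝ} (hx : 0 < x) (hδ : 0 < δ) (hm : δ ≤ m)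
    (hα : α ∈ Set.Icc 0 1) : (x + m)⁻¹ ≤ (1 + 1 / δ) * x ^ (-α) := by
  have rpow_le : x ^ α ≤ x + 1 := by
    have := rpow_one_add_le_one_add_mul_self (s := x - 1) (by linarith) hα.1 hα.2
    rw [add_sub_cancel] at this
    nlinarith [hα.1, hα.2]
  have one_le : 1 ≤ m / δ := (one_le_div hδ).2 hm
  rw [Real.rpow_neg hx.le, ← div_eq_mul_inv, le_div_iff₀ (by positivity),
    inv_mul_le_iff₀ (by linarith)]
  calc x ^ α ≤ x + m / δ := by linarith
    _ ≤ (x + m) + (x + m) / δ := by gcongr <;> linarith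
    _ = (x + m) * (1 + 1 / δ) := by ring

theorem statement11_general {δ : ℝ} (hδ : 0 < δ) :
    ∃ B : ℝ, 0 < B ∧ ∀ x : ℝ, 0 < x → ∀ ν : ℂ, ν.re = 0 → δ ≤ ‖ν‖ → ∀ α ∈ Set.Icc (0 : ℝ) 1,
      ‖besselJ ν x ^ 2 + besselY ν x ^ 2‖ ≤ B * x ^ (-α) := by
  set K := 2 * (1 + 2 / (Real.pi * δ)) * ((10 + 3 / (2 * δ ^ 2)) / Real.pi)
  refine ⟨K * (1 + 1 / δ), by positivity, fun x hx ν hν hδν α hα => ?_⟩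
  have ν_ne : ν ≠ 0 := norm_pos_iff.1 (hδ.trans_le hδν)
  calc ‖besselJ ν x ^ 2 + besselY ν x ^ 2‖
      ≤ 2 * (1 + 2 / (Real.pi * ‖ν‖)) * ((10 + 3 / (2 * ‖ν‖ ^ 2)) / Real.pi) / (x + ‖ν‖) :=
        norm_besselJ_sq_add_besselY_sq_le hν ν_ne hx
    _ ≤ K / (x + ‖ν‖) := by
        unfold K
        gcongr
    _ ≤ K * ((1 + 1 / δ) * x ^ (-α)) := by
        rw [div_eq_mul_inv]
        gcongr
        exact inv_add_le_mul_rpow_neg hx hδ hδν hα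
    _ = K * (1 + 1 / δ) * x ^ (-α) := by ring

theorem statement11 :
    ∃ B : ℝ, 0 < B ∧ ∀ x : ℝ, 0 < x → ∀ n : ℕ, 1 ≤ n →
      ‖(besselJ (Complex.I * n / 2) x) ^ 2 + (besselY (Complex.I * n / 2) x) ^ 2‖
        ≤ B * x ^ (-(1 / 4 : ℝ)) := by
  obtain ⟨B, B_pos, bound⟩ := statement11_general (one_half_pos (α := ℝ))
  refine ⟨B, B_pos, fun x hx n hn => bound x hx _ (by simp) ?_ _ (by norm_num)⟩
  have : (1 : ℝ) ≤ n := by exact_mod_cast hn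
  simpa using by linarith
end

section
/- For every x > 0 and every n ∈ ℕ, n ≥ 1, |Re[J_{in/2}(x)²]| / cosh(πn/2) ≤ (2·e^{2x}/(πn)) · tanh(πn/2), and in particular |Re[J_{in/2}(x)²]| / cosh(πn/2) ≤ 2·e^{2x}/(πn). -/
open MeasureTheory Filter Topology

/-!
For `Re ν ≥ 0` the recurrence `Γ(s + 1) = s Γ(s)` gives `|Γ(ν + k + 1)| ≥ k! |Γ(ν + 1)|`, and
`(2k)! ≤ 4 ^ k (k!) ^ 2`, so the Bessel series is dominated term by term by the series of
`(x / 2) ^ Re ν * cosh x / |Γ(ν + 1)|`. On the imaginary axis the reflection formula evaluates the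
denominator: `|Γ(1 + iy)| ^ 2 = π y / sinh (π y)`.
-/

theorem factorial_mul_norm_Gamma_add_one_le {s : ℂ} (hs : 0 ≤ s.re) (k : ℕ) :
    (k.factorial : ℝ) * ‖Complex.Gamma (s + 1)‖ ≤ ‖Complex.Gamma (s + k + 1)‖ := by
  induction k with
  | zero => simp
  | succ k ih =>
    have hle : (k : ℝ) + 1 ≤ ‖s + k + 1‖ := by
      have hre : (s + k + 1).re = s.re + k + 1 := by simp
      linarith [Complex.re_le_norm (s + k + 1)]
    have hne : s + k + 1 ≠ 0 := norm_pos_iff.1 (by linarith [k.cast_nonneg (α := ℝ)])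
    calc ((k + 1).factorial : ℝ) * ‖Complex.Gamma (s + 1)‖
        = (k + 1) * (k.factorial * ‖Complex.Gamma (s + 1)‖) := by
          rw [Nat.factorial_succ]; push_cast; ring
      _ ≤ ‖s + k + 1‖ * ‖Complex.Gamma (s + k + 1)‖ := by gcongr
      _ = ‖Complex.Gamma (s + (k + 1 : ℕ) + 1)‖ := by
          rw [← norm_mul, ← Complex.Gamma_add_one _ hne]; push_cast; ring_nf

theorem norm_Gamma_I_mul_add_one_sq {y : ℝ} (hy : y ≠ 0) :
    ‖Complex.Gamma (Complex.I * y + 1)‖ ^ 2 = Real.pi * y / Real.sinh (Real.pi * y) := by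
  have hIy : Complex.I * (y : ℂ) ≠ 0 :=
    mul_ne_zero Complex.I_ne_zero (Complex.ofReal_ne_zero.2 hy)
  have hconj : (starRingEnd ℂ) (Complex.Gamma (Complex.I * y + 1)) =
      Complex.Gamma (1 - Complex.I * y) := by
    rw [← Complex.Gamma_conj]
    congr 1
    simp [sub_eq_neg_add]
  have hsin : Complex.sin (Real.pi * (Complex.I * y)) =
      (Real.sinh (Real.pi * y) : ℂ) * Complex.I := by
    rw [mul_left_comm, mul_comm Complex.I, Complex.sin_mul_I]
    push_cast
    rfl
  have hreflection : ((‖Complex.Gamma (Complex.I * y + 1)‖ ^ 2 : ℝ) : ℂ) =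
      (Real.pi * y / Real.sinh (Real.pi * y) : ℝ) := by
    calc ((‖Complex.Gamma (Complex.I * y + 1)‖ ^ 2 : ℝ) : ℂ)
        = Complex.Gamma (Complex.I * y + 1) * Complex.Gamma (1 - Complex.I * y) := by
          rw [← hconj, Complex.mul_conj, Complex.normSq_eq_norm_sq]
      _ = Complex.I * y * (Real.pi / (Real.sinh (Real.pi * y) * Complex.I)) := by
          rw [Complex.Gamma_add_one _ hIy, mul_assoc, Complex.Gamma_mul_Gamma_one_sub, hsin]
      _ = (Real.pi * y / Real.sinh (Real.pi * y) : ℝ) := by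
          have hI := Complex.I_ne_zero
          push_cast
          field_simp
  exact_mod_cast hreflection

theorem factorial_two_mul_le_four_pow_mul_factorial_sq (k : ℕ) :
    (2 * k).factorial ≤ 4 ^ k * k.factorial ^ 2 := by
  calc (2 * k).factorial = k.centralBinom * k.factorial ^ 2 := by
        rw [Nat.centralBinom, sq, ← mul_assoc, two_mul, Nat.add_choose_mul_factorial_mul_factorial]
    _ ≤ 4 ^ k * k.factorial ^ 2 := by gcongr; exact k.centralBinom_le_four_pow

theorem half_pow_two_mul_div_factorial_sq_le (x : ℝ) (k : ℕ) :
    (x / 2) ^ (2 * k) / (k.factorial : ℝ) ^ 2 ≤ x ^ (2 * k) / ((2 * k).factorial : ℝ) := by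
  have hfactorial : ((2 * k).factorial : ℝ) ≤ 4 ^ k * (k.factorial : ℝ) ^ 2 :=
    mod_cast factorial_two_mul_le_four_pow_mul_factorial_sq k
  have hpow : 0 ≤ x ^ (2 * k) := (even_two_mul k).pow_nonneg x
  calc (x / 2) ^ (2 * k) / (k.factorial : ℝ) ^ 2
      = x ^ (2 * k) / (4 ^ k * (k.factorial : ℝ) ^ 2) := by
        rw [div_pow, pow_mul 2 2 k, div_div]; norm_num
    _ ≤ x ^ (2 * k) / ((2 * k).factorial : ℝ) := by gcongr

theorem norm_exp_add_two_mul_log (ν : ℂ) {t : ℝ} (ht : 0 < t) (k : ℕ) :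
    ‖Complex.exp ((ν + 2 * k) * (Real.log t : ℂ))‖ = t ^ ν.re * t ^ (2 * k) := by
  have hre : ((ν + 2 * k) * (Real.log t : ℂ)).re =
      (ν.re + (2 * k : ℕ)) * Real.log t := by
    simp
  rw [Complex.norm_exp, hre, add_mul, Real.exp_add, mul_comm ν.re, ← Real.rpow_def_of_pos ht,
    Real.exp_nat_mul, Real.exp_log ht]

theorem norm_besselJ_term_le {ν : ℂ} (hν : 0 ≤ ν.re) {x : ℝ} (hx : 0 < x) (k : ℕ) :
    ‖((-1 : ℂ) ^ k * Complex.exp ((ν + 2 * k) * (Real.log (x / 2) : ℂ))) /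
        ((k.factorial : ℂ) * Complex.Gamma (ν + k + 1))‖ ≤
      (x / 2) ^ ν.re / ‖Complex.Gamma (ν + 1)‖ * (x ^ (2 * k) / ((2 * k).factorial : ℝ)) := by
  have hGamma : 0 < ‖Complex.Gamma (ν + 1)‖ := by
    refine norm_pos_iff.2 (Complex.Gamma_ne_zero_of_re_pos ?_)
    rw [Complex.add_re, Complex.one_re]
    positivity
  calc ‖((-1 : ℂ) ^ k * Complex.exp ((ν + 2 * k) * (Real.log (x / 2) : ℂ))) /
        ((k.factorial : ℂ) * Complex.Gamma (ν + k + 1))‖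
      = (x / 2) ^ ν.re * (x / 2) ^ (2 * k) /
          (k.factorial * ‖Complex.Gamma (ν + k + 1)‖) := by
        rw [norm_div, norm_mul, norm_mul, norm_exp_add_two_mul_log ν (half_pos hx), norm_pow,
          norm_neg, norm_one, one_pow, one_mul, Complex.norm_natCast]
    _ ≤ (x / 2) ^ ν.re * (x / 2) ^ (2 * k) /
          (k.factorial * (k.factorial * ‖Complex.Gamma (ν + 1)‖)) := by
        gcongr
        exact factorial_mul_norm_Gamma_add_one_le hν k
    _ = (x / 2) ^ ν.re / ‖Complex.Gamma (ν + 1)‖ *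
          ((x / 2) ^ (2 * k) / (k.factorial : ℝ) ^ 2) := by
        field_simp
    _ ≤ _ := by
        gcongr ?_ * ?_
        exact half_pow_two_mul_div_factorial_sq_le x k

theorem norm_besselJ_le {ν : ℂ} (hν : 0 ≤ ν.re) {x : ℝ} (hx : 0 < x) :
    ‖besselJ ν x‖ ≤ (x / 2) ^ ν.re / ‖Complex.Gamma (ν + 1)‖ * Real.cosh x :=
  tsum_of_norm_bounded ((Real.hasSum_cosh x).mul_left _) (norm_besselJ_term_le hν hx)

theorem norm_besselJ_I_mul_sq_le {y : ℝ} (hy : y ≠ 0) {x : ℝ} (hx : 0 < x) :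
    ‖besselJ (Complex.I * y) x‖ ^ 2 ≤
      Real.cosh x ^ 2 * (Real.sinh (Real.pi * y) / (Real.pi * y)) := by
  have hre : (Complex.I * (y : ℂ)).re = 0 := by simp
  have hbound := norm_besselJ_le hre.ge hx
  rw [hre, Real.rpow_zero] at hbound
  calc ‖besselJ (Complex.I * y) x‖ ^ 2
      ≤ (1 / ‖Complex.Gamma (Complex.I * y + 1)‖ * Real.cosh x) ^ 2 := by gcongr
    _ = Real.cosh x ^ 2 * (Real.sinh (Real.pi * y) / (Real.pi * y)) := by
        rw [mul_pow, one_div, inv_pow, norm_Gamma_I_mul_add_one_sq hy, inv_div, mul_comm]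

theorem cosh_sq_le_exp_two_mul {x : ℝ} (hx : 0 ≤ x) : Real.cosh x ^ 2 ≤ Real.exp (2 * x) := by
  have hcosh : Real.cosh x ≤ Real.exp x := by
    linarith [Real.cosh_add_sinh x, Real.sinh_nonneg_iff.2 hx]
  calc Real.cosh x ^ 2 ≤ Real.exp x ^ 2 := by gcongr
    _ = Real.exp (2 * x) := (Real.exp_nat_mul x 2).symm

theorem statement12_general (x : ℝ) (hx : 0 < x) (t : ℝ) (ht : 0 < t) :
    ‖besselJ (Complex.I * t / 2) x‖ ^ 2 / Real.cosh (Real.pi * t / 2)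
      ≤ (2 * Real.exp (2 * x) / (Real.pi * t)) * Real.tanh (Real.pi * t / 2) ∧
    ‖besselJ (Complex.I * t / 2) x‖ ^ 2 / Real.cosh (Real.pi * t / 2)
      ≤ 2 * Real.exp (2 * x) / (Real.pi * t) := by
  have hbound := norm_besselJ_I_mul_sq_le (half_pos ht).ne' hx
  rw [Complex.ofReal_div, Complex.ofReal_ofNat, ← mul_div_assoc Complex.I,
    ← mul_div_assoc Real.pi] at hbound
  have htanh : ‖besselJ (Complex.I * t / 2) x‖ ^ 2 / Real.cosh (Real.pi * t / 2)
      ≤ (2 * Real.exp (2 * x) / (Real.pi * t)) * Real.tanh (Real.pi * t / 2) := by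
    calc ‖besselJ (Complex.I * t / 2) x‖ ^ 2 / Real.cosh (Real.pi * t / 2)
        ≤ Real.exp (2 * x) * (Real.sinh (Real.pi * t / 2) / (Real.pi * t / 2)) /
            Real.cosh (Real.pi * t / 2) := by
          gcongr
          exact hbound.trans (by gcongr; exact cosh_sq_le_exp_two_mul hx.le)
      _ = _ := by
          rw [Real.tanh_eq_sinh_div_cosh]
          field_simp
  exact ⟨htanh, htanh.trans
    (mul_le_of_le_one_right (by positivity) (Real.tanh_lt_one _).le)⟩

theorem statement12 (x : ℝ) (hx : 0 < x) (n : ℕ) (hn : 1 ≤ n) :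
    |((besselJ (Complex.I * n / 2) x) ^ 2).re| / Real.cosh (Real.pi * n / 2)
      ≤ (2 * Real.exp (2 * x) / (Real.pi * n)) * Real.tanh (Real.pi * n / 2) ∧
    |((besselJ (Complex.I * n / 2) x) ^ 2).re| / Real.cosh (Real.pi * n / 2)
      ≤ 2 * Real.exp (2 * x) / (Real.pi * n) := by
  have hre := div_le_div_of_nonneg_right ((Complex.abs_re_le_norm _).trans_eq
    (norm_pow (besselJ (Complex.I * n / 2) x) 2)) (Real.cosh_pos (Real.pi * n / 2)).le
  exact (statement12_general x hx n (mod_cast hn)).imp hre.trans hre.trans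
end
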